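/- arXiv:0807.3835 — 5 statements merged into one kernel-verified Lean document; each statement's English description precedes it below -/
import Mathlib

section
/- Let T: Lip(X) → Lip(Y) be a bijective linear separating map, where Lip(X) and Lip(Y) denote the spaces of bounded scalar-valued Lipschitz functions. If Y is compact, then T⁻¹ is also separating (so T is biseparating) and T is continuous. -/
/-!
The proof rests on support points. Say that `x` supports `y` when `T f y = 0` for every `f` that
vanishes near `x`. No continuity of `T` is assumed, so a priori `f ↦ T f y` may see more of the
germ of `f` at `x` than the value `f x` (for instance a generalized derivative at `x`).

* Every `x` supports some `y` (`exists_isSupp`), because `Y` is compact and `T` is injective.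
* Let `badSet T m` be the set of `x` supporting some `y` for which there is an `m`-Lipschitz `f`
  with `f x = 0` and `T f y = 1`. It is finite (`finite_badSet`): otherwise, cut off such functions
  to pairwise disjoint small balls, with a uniform Lipschitz bound. Their sum over the even indices
  is Lipschitz, and its image takes the values `1` and `0` alternately along a convergent sequence.
  Moreover `badSet T m` contains no isolated point of `X`. By Baire's theorem the points `x` outside
  all `badSet T m` are dense; for those, `T f y = f x * T 1 y` whenever `x` supports `y`, and
  `T 1 y ≠ 0` (`exists_dense_good`).

If `f` and `g` are both nonzero at a point, they are nonzero at a nearby good `x`, so `T f` and `T g`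
are both nonzero at a `y` supported by `x`: the inverse is separating. Evaluating at good points
also shows that the graph of `T` is closed, and `Lip` is a Banach space, so `T` is continuous.
-/

open Metric Set Function Bornology
open scoped NNReal

/-- `f` is a bounded Lipschitz function. -/
def IsLip {X E : Type*} [PseudoMetricSpace X] [NormedAddCommGroup E] (f : X → E) : Prop :=
  (∃ K : ℝ≥0, LipschitzWith K f) ∧ ∃ C : ℝ, ∀ x, ‖f x‖ ≤ C

/-- The cozero set of `f`. -/
def coz {X E : Type*} [Zero E] (f : X → E) : Set X := {x | f x ≠ 0}

/-- The norm `‖f‖_L = max {‖f‖_∞, L(f)}` on bounded Lipschitz functions. -/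
noncomputable def lipNorm {X E : Type*} [PseudoMetricSpace X] [NormedAddCommGroup E]
    (f : X → E) : ℝ :=
  max (⨆ x, ‖f x‖) (⨆ p : X × X, ‖f p.1 - f p.2‖ / dist p.1 p.2)

/-- `T` is a linear biseparating map from `Lip(X,E)` onto `Lip(Y,F)`:
it maps bounded Lipschitz functions to bounded Lipschitz functions, is linear,
restricts to a bijection between the spaces of bounded Lipschitz functions, and
both `T` and its inverse are separating (disjointness preserving). -/
structure IsBisep (𝕂 : Type*) {X Y E F : Type*} [RCLike 𝕂]
    [PseudoMetricSpace X] [PseudoMetricSpace Y]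
    [NormedAddCommGroup E] [NormedSpace 𝕂 E] [NormedAddCommGroup F] [NormedSpace 𝕂 F]
    (T : (X → E) → (Y → F)) : Prop where
  maps_lip : ∀ f, IsLip f → IsLip (T f)
  map_add : ∀ f g, IsLip f → IsLip g → T (f + g) = T f + T g
  map_smul : ∀ (c : 𝕂) (f : X → E), IsLip f → T (c • f) = c • T f
  inj : ∀ f g, IsLip f → IsLip g → T f = T g → f = g
  surj : ∀ g, IsLip g → ∃ f, IsLip f ∧ T f = g
  sep : ∀ f g, IsLip f → IsLip g → coz f ∩ coz g = ∅ → coz (T f) ∩ coz (T g) = ∅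
  sep_inv : ∀ f g, IsLip f → IsLip g → coz (T f) ∩ coz (T g) = ∅ → coz f ∩ coz g = ∅

open Filter Topology

/-! ### Bounded Lipschitz functions and cutoffs -/

section Lip

variable {𝕂 X : Type*} [RCLike 𝕂] [MetricSpace X]

lemma isLip_of_le {f : X → 𝕂} (K C : ℝ) (h : ∀ p q, ‖f p - f q‖ ≤ K * dist p q)
    (hC : ∀ p, ‖f p‖ ≤ C) : IsLip f :=
  ⟨⟨K.toNNReal, LipschitzWith.of_dist_le' fun p q => by simpa [dist_eq_norm] using h p q⟩, C, hC⟩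

lemma IsLip.exists_bounds {f : X → 𝕂} (hf : IsLip f) :
    ∃ K C : ℝ, 0 ≤ K ∧ 0 ≤ C ∧ (∀ p q, ‖f p - f q‖ ≤ K * dist p q) ∧ ∀ p, ‖f p‖ ≤ C := by
  obtain ⟨⟨K, hK⟩, C, hC⟩ := hf
  exact ⟨K, max C 0, K.2, le_max_right _ _,
    fun p q => by simpa [dist_eq_norm] using hK.dist_le_mul p q,
    fun p => (hC p).trans (le_max_left _ _)⟩

lemma IsLip.continuous {f : X → 𝕂} (hf : IsLip f) : Continuous f := by
  obtain ⟨⟨K, hK⟩, -⟩ := hf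
  exact hK.continuous

lemma isLip_const (c : 𝕂) : IsLip (fun _ : X => c) :=
  isLip_of_le 0 ‖c‖ (by simp) (by simp)

lemma isLip_zero : IsLip (0 : X → 𝕂) := isLip_const 0

lemma IsLip.smul {f : X → 𝕂} (hf : IsLip f) (c : 𝕂) : IsLip (c • f) := by
  obtain ⟨K, C, hK0, hC0, hK, hC⟩ := hf.exists_bounds
  refine isLip_of_le (‖c‖ * K) (‖c‖ * C) (fun p q => ?_) fun p => ?_
  · rw [Pi.smul_apply, Pi.smul_apply, ← smul_sub, norm_smul, mul_assoc]
    exact mul_le_mul_of_nonneg_left (hK p q) (norm_nonneg _)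
  · rw [Pi.smul_apply, norm_smul]
    exact mul_le_mul_of_nonneg_left (hC p) (norm_nonneg _)

lemma IsLip.add {f g : X → 𝕂} (hf : IsLip f) (hg : IsLip g) : IsLip (f + g) := by
  obtain ⟨K, C, -, -, hK, hC⟩ := hf.exists_bounds
  obtain ⟨K', C', -, -, hK', hC'⟩ := hg.exists_bounds
  refine isLip_of_le (K + K') (C + C') (fun p q => ?_) fun p => ?_
  · have : (f + g) p - (f + g) q = (f p - f q) + (g p - g q) := by
      simp only [Pi.add_apply]; ring
    rw [this, add_mul]
    exact (norm_add_le _ _).trans (add_le_add (hK p q) (hK' p q))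
  · exact (norm_add_le _ _).trans (add_le_add (hC p) (hC' p))

lemma IsLip.sub {f g : X → 𝕂} (hf : IsLip f) (hg : IsLip g) : IsLip (f - g) := by
  have := hf.add (hg.smul (-1))
  rwa [neg_one_smul, ← sub_eq_add_neg] at this

lemma IsLip.mul {f g : X → 𝕂} (hf : IsLip f) (hg : IsLip g) : IsLip (f * g) := by
  obtain ⟨K, C, hK0, hC0, hK, hC⟩ := hf.exists_bounds
  obtain ⟨K', C', hK0', hC0', hK', hC'⟩ := hg.exists_bounds
  refine isLip_of_le (C * K' + K * C') (C * C') (fun p q => ?_) fun p => ?_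
  · have : (f * g) p - (f * g) q = f p * (g p - g q) + (f p - f q) * g q := by
      simp only [Pi.mul_apply]; ring
    rw [this]
    refine (norm_add_le _ _).trans ?_
    rw [norm_mul, norm_mul]
    have h1 : ‖f p‖ * ‖g p - g q‖ ≤ C * (K' * dist p q) :=
      mul_le_mul (hC p) (hK' p q) (norm_nonneg _) hC0
    have h2 : ‖f p - f q‖ * ‖g q‖ ≤ (K * dist p q) * C' :=
      mul_le_mul (hK p q) (hC' q) (norm_nonneg _) (by positivity)
    linarith
  · rw [Pi.mul_apply, norm_mul]
    exact mul_le_mul (hC p) (hC' p) (norm_nonneg _) hC0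

/-- The `r⁻¹`-Lipschitz cutoff equal to `1` on the `r`-neighbourhood of `S` and to `0` outside its
`2r`-neighbourhood. -/
noncomputable def cut (𝕂 : Type*) [RCLike 𝕂] {X : Type*} [MetricSpace X] (S : Set X) (r : ℝ)
    (p : X) : 𝕂 :=
  ((max 0 (min 1 (2 - infDist p S / r)) : ℝ) : 𝕂)

lemma norm_cut_le (S : Set X) (r : ℝ) (p : X) : ‖cut 𝕂 S r p‖ ≤ 1 := by
  rw [cut, RCLike.norm_ofReal, abs_of_nonneg (le_max_left _ _)]
  exact max_le zero_le_one (min_le_left _ _)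

lemma norm_cut_sub_le (S : Set X) {r : ℝ} (hr : 0 < r) (p q : X) :
    ‖cut 𝕂 S r p - cut 𝕂 S r q‖ ≤ r⁻¹ * dist p q := by
  have key : ∀ a b : ℝ, |max 0 (min 1 a) - max 0 (min 1 b)| ≤ |a - b| := fun a b => by
    have := ((LipschitzWith.id (α := ℝ)).const_min 1 |>.const_max 0).dist_le_mul a b
    simpa [Real.dist_eq] using this
  rw [cut, cut, ← RCLike.ofReal_sub, RCLike.norm_ofReal]
  refine (key _ _).trans ?_
  have h1 : 2 - infDist p S / r - (2 - infDist q S / r) =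
      r⁻¹ * (infDist q S - infDist p S) := by field_simp; ring
  have h2 : |infDist q S - infDist p S| ≤ dist p q := by
    have := (lipschitz_infDist_pt S).dist_le_mul q p
    rwa [Real.dist_eq, NNReal.coe_one, one_mul, dist_comm] at this
  rw [h1, abs_mul, abs_of_pos (inv_pos.2 hr)]
  exact mul_le_mul_of_nonneg_left h2 (inv_pos.2 hr).le

lemma isLip_cut (S : Set X) {r : ℝ} (hr : 0 < r) : IsLip (cut 𝕂 S r) :=
  isLip_of_le _ _ (norm_cut_sub_le S hr) (norm_cut_le S r)

lemma cut_eq_one {S : Set X} {r : ℝ} (hr : 0 < r) {p : X} (h : infDist p S ≤ r) :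
    cut 𝕂 S r p = 1 := by
  have : infDist p S / r ≤ 1 := (div_le_one hr).2 h
  rw [cut, min_eq_left (by linarith), max_eq_right zero_le_one, RCLike.ofReal_one]

lemma cut_eq_zero {S : Set X} {r : ℝ} (hr : 0 < r) {p : X} (h : 2 * r ≤ infDist p S) :
    cut 𝕂 S r p = 0 := by
  have : 2 ≤ infDist p S / r := (le_div_iff₀ hr).2 h
  rw [cut, max_eq_left ((min_le_right _ _).trans (by linarith)), RCLike.ofReal_zero]

/-- A sum of uniformly Lipschitz functions with pairwise disjoint cozero sets is Lipschitz: for two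
points in different cozero sets, each of the two values is a difference of values of one of the
functions. -/
lemma isLip_glue {g : ℕ → X → 𝕂} {K C : ℝ} (hK0 : 0 ≤ K) (hC0 : 0 ≤ C)
    (hK : ∀ n p q, ‖g n p - g n q‖ ≤ K * dist p q) (hC : ∀ n p, ‖g n p‖ ≤ C)
    (hd : ∀ n m p, n ≠ m → g n p ≠ 0 → g m p = 0) :
    ∃ G : X → 𝕂, IsLip G ∧ (∀ n p, g n p ≠ 0 → G p = g n p) ∧
      ∀ p, (∀ n, g n p = 0) → G p = 0 := by
  classical
  let G : X → 𝕂 := fun p => if h : ∃ n, g n p ≠ 0 then g h.choose p else 0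
  have h1 : ∀ n p, g n p ≠ 0 → G p = g n p := fun n p hn => by
    have hex : ∃ n, g n p ≠ 0 := ⟨n, hn⟩
    have : hex.choose = n := by
      by_contra hne
      exact hn (hd _ _ p hne hex.choose_spec)
    simp only [G, dif_pos hex, this]
  have h2 : ∀ p, (∀ n, g n p = 0) → G p = 0 := fun p hp => by
    simp [G, hp]
  have h3 : ∀ p q, ‖G p - G q‖ ≤ 2 * K * dist p q := fun p q => by
    have hpos : 0 ≤ K * dist p q := by positivity
    by_cases hp : ∃ n, g n p ≠ 0
    · obtain ⟨n, hn⟩ := hp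
      by_cases hq : ∃ m, g m q ≠ 0
      · obtain ⟨m, hm⟩ := hq
        rw [h1 n p hn, h1 m q hm]
        by_cases hnm : n = m
        · subst hnm
          linarith [hK n p q]
        · have a := hK n p q
          have b := hK m p q
          rw [hd m n q (Ne.symm hnm) hm, sub_zero] at a
          rw [hd n m p hnm hn, zero_sub, norm_neg] at b
          linarith [norm_sub_le (g n p) (g m q)]
      · push Not at hq
        have a := hK n p q
        rw [hq n] at a
        rw [h1 n p hn, h2 q hq]
        linarith
    · push Not at hp
      by_cases hq : ∃ m, g m q ≠ 0
      · obtain ⟨m, hm⟩ := hq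
        have b := hK m p q
        rw [hp m] at b
        rw [h2 p hp, h1 m q hm]
        linarith
      · push Not at hq
        rw [h2 p hp, h2 q hq]
        simp only [sub_self, norm_zero]
        linarith
  refine ⟨G, isLip_of_le (2 * K) C h3 fun p => ?_, h1, h2⟩
  by_cases hp : ∃ n, g n p ≠ 0
  · obtain ⟨n, hn⟩ := hp
    rw [h1 n p hn]
    exact hC n p
  · push Not at hp
    rw [h2 p hp]
    simpa using hC0

end Lip

/-! ### Separating bijections and support points -/

section Sep

variable {𝕂 X Y : Type*} [RCLike 𝕂] [MetricSpace X] [MetricSpace Y]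

/-- `T` restricts to a linear separating bijection from `Lip(X)` onto `Lip(Y)`. Nothing is required
of `T` outside bounded Lipschitz functions. -/
structure IsSepBij (T : (X → 𝕂) → (Y → 𝕂)) : Prop where
  maps : ∀ f, IsLip f → IsLip (T f)
  add : ∀ f g, IsLip f → IsLip g → T (f + g) = T f + T g
  smul : ∀ (c : 𝕂) (f : X → 𝕂), IsLip f → T (c • f) = c • T f
  inj : ∀ f g, IsLip f → IsLip g → T f = T g → f = g
  surj : ∀ g, IsLip g → ∃ f, IsLip f ∧ T f = g
  sep : ∀ f g, IsLip f → IsLip g → coz f ∩ coz g = ∅ → coz (T f) ∩ coz (T g) = ∅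

/-- The point `x` supports `y`: `T f y = 0` for every bounded Lipschitz `f` vanishing near `x`. -/
def IsSupp (T : (X → 𝕂) → (Y → 𝕂)) (x : X) (y : Y) : Prop :=
  ∀ f, IsLip f → (∃ r > 0, ∀ p, dist p x < r → f p = 0) → T f y = 0

/-- The points `x` supporting some `y` such that `f ↦ T f y` does not vanish on all functions
vanishing at `x`, as witnessed by an `m`-Lipschitz function, normalized by `T f y = 1`. -/
def badSet (T : (X → 𝕂) → (Y → 𝕂)) (m : ℕ) : Set X :=
  {x | ∃ y f, IsSupp T x y ∧ IsLip f ∧ (∀ p q, ‖f p - f q‖ ≤ m * dist p q) ∧ f x = 0 ∧ T f y = 1}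

namespace IsSepBij

variable {T : (X → 𝕂) → (Y → 𝕂)} (hT : IsSepBij T)
include hT

lemma map_zero : T 0 = 0 := by
  have := hT.smul 0 0 isLip_zero
  simpa using this

lemma map_sub {f g : X → 𝕂} (hf : IsLip f) (hg : IsLip g) : T (f - g) = T f - T g := by
  have h := hT.add f ((-1 : 𝕂) • g) hf (hg.smul _)
  rw [hT.smul _ _ hg, neg_one_smul, neg_one_smul, ← sub_eq_add_neg, ← sub_eq_add_neg] at h
  exact h

lemma exists_apply_eq_one (y : Y) : ∃ f, IsLip f ∧ T f y = 1 := by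
  obtain ⟨f, hf, h⟩ := hT.surj _ (isLip_const (1 : 𝕂))
  exact ⟨f, hf, by rw [h]⟩

lemma apply_eq_zero {f g : X → 𝕂} (hf : IsLip f) (hg : IsLip g)
    (h : ∀ p, g p ≠ 0 → f p = 0) {y : Y} (hy : T g y ≠ 0) : T f y = 0 := by
  have hd : coz f ∩ coz g = ∅ := by
    ext p
    simp only [coz, mem_inter_iff, mem_ofPred_eq, mem_empty_iff_false, iff_false, not_and]
    exact fun hfp hgp => hfp (h p hgp)
  by_contra hne
  have : y ∈ coz (T f) ∩ coz (T g) := ⟨hne, hy⟩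
  rw [hT.sep f g hf hg hd] at this
  exact this

lemma exists_apply_ne_zero {f : X → 𝕂} (hf : IsLip f) {x : X} (hx : f x ≠ 0) :
    ∃ y, T f y ≠ 0 := by
  by_contra! h
  have h0 : T f = T 0 := by
    rw [hT.map_zero]
    exact funext h
  exact hx (congrFun (hT.inj _ _ hf isLip_zero h0) x)

lemma exists_isSupp [CompactSpace Y] (x : X) : ∃ y, IsSupp T x y := by
  by_contra! hno
  -- `p s` holds when functions supported close enough to `x` have image vanishing on `s`.
  have key : ∃ r > 0, ∀ k : X → 𝕂, IsLip k → (∀ p, r ≤ dist p x → k p = 0) →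
      ∀ y ∈ (univ : Set Y), T k y = 0 := by
    refine isCompact_univ.induction_on (p := fun s => ∃ r > 0, ∀ k : X → 𝕂, IsLip k →
      (∀ p, r ≤ dist p x → k p = 0) → ∀ y ∈ s, T k y = 0) ?_ ?_ ?_ ?_
    · exact ⟨1, one_pos, fun k _ _ y hy => hy.elim⟩
    · rintro s t hst ⟨r, hr, h⟩
      exact ⟨r, hr, fun k hk hk' y hy => h k hk hk' y (hst hy)⟩
    · rintro s t ⟨r, hr, h⟩ ⟨r', hr', h'⟩
      refine ⟨min r r', lt_min hr hr', fun k hk hk' y hy => ?_⟩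
      rcases hy with hy | hy
      · exact h k hk (fun p hp => hk' p ((min_le_left _ _).trans hp)) y hy
      · exact h' k hk (fun p hp => hk' p ((min_le_right _ _).trans hp)) y hy
    · intro y _
      have := hno y
      simp only [IsSupp] at this
      push Not at this
      obtain ⟨f, hf, ⟨r, hr, hfr⟩, hfy⟩ := this
      refine ⟨{z | T f z ≠ 0}, mem_nhdsWithin_of_mem_nhds ?_, r, hr, fun k hk hk' z hz => ?_⟩
      · exact (isOpen_ne.preimage (hT.maps f hf).continuous).mem_nhds hfy
      · refine hT.apply_eq_zero hk hf (fun p hp => hk' p ?_) hz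
        by_contra! hlt
        exact hp (hfr p hlt)
  obtain ⟨r, hr, h⟩ := key
  have hc : IsLip (cut 𝕂 {x} (r / 2)) := isLip_cut _ (by positivity)
  obtain ⟨y, hy⟩ := hT.exists_apply_ne_zero hc (x := x) (by
    rw [cut_eq_one (by positivity) (by rw [infDist_singleton, dist_self]; positivity)]
    exact one_ne_zero)
  exact hy (h _ hc (fun p hp => cut_eq_zero (by positivity)
    (by rw [infDist_singleton]; linarith)) y trivial)

lemma apply_eq_of_eq_near {f g : X → 𝕂} (hf : IsLip f) (hg : IsLip g) {x : X} {y : Y}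
    (hxy : IsSupp T x y) {r : ℝ} (hr : 0 < r) (h : ∀ p, dist p x < r → f p = g p) :
    T f y = T g y := by
  have := hxy (f - g) (hf.sub hg) ⟨r, hr, fun p hp => by simp [h p hp]⟩
  rwa [hT.map_sub hf hg, Pi.sub_apply, sub_eq_zero] at this

lemma finite_badSet [CompactSpace Y] (hXb : IsBounded (univ : Set X)) (m : ℕ) :
    (badSet T m).Finite := by
  by_contra hinf
  have : Infinite (badSet T m) := Set.infinite_coe_iff.2 hinf
  obtain ⟨U, hUinf, hUo, hUd⟩ := exists_seq_infinite_isOpen_pairwise_disjoint (badSet T m)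
  choose x hx using fun n => (hUinf n).nonempty
  have hball : ∀ n, ∃ ρ > 0, ball (x n) ρ ⊆ U n := fun n => Metric.isOpen_iff.1 (hUo n) _ (hx n)
  choose ρ hρ hρU using hball
  have hdist : ∀ i j, i ≠ j → ρ i ≤ dist (x j : X) (x i) := fun i j hij => by
    by_contra! hlt
    exact Set.disjoint_left.1 (hUd hij) (hρU i hlt) (hx j)
  choose y f hsupp hf hflip hf0 hf1 using fun n => (x n).2
  obtain ⟨z, φ, hφ, hlim⟩ := CompactSpace.tendsto_subseq y
  -- The cutoff at scale `ρ n / 4` lives in the ball of radius `ρ n / 2`; these balls are disjoint.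
  let g : ℕ → X → 𝕂 := fun n => f n * cut 𝕂 {(x n : X)} (ρ n / 4)
  have hr : ∀ n, 0 < ρ n / 4 := fun n => by have := hρ n; positivity
  have hg : ∀ n, IsLip (g n) := fun n => (hf n).mul (isLip_cut _ (hr n))
  have hgne : ∀ n (p : X), g n p ≠ 0 → dist p (x n) < ρ n / 2 := fun n p hp => by
    by_contra! hle
    refine hp ?_
    simp only [g, Pi.mul_apply]
    rw [cut_eq_zero (hr n) (by rw [infDist_singleton]; linarith), mul_zero]
  have hdisj : ∀ n k (p : X), n ≠ k → dist p (x n) < ρ n / 2 → dist p (x k) < ρ k / 2 → False :=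
    fun n k p hnk h1 h2 => by
      have h3 := hdist n k hnk
      have h4 := hdist k n hnk.symm
      have h5 := dist_triangle_left (x n : X) (x k) p
      rw [dist_comm] at h3
      linarith
  -- Since `f n` vanishes at `x n`, it is of size `m * ρ n / 2` on the support of the cutoff, which
  -- compensates for the Lipschitz constant `4 / ρ n` of the latter.
  have hfsmall : ∀ n (p : X), ‖f n p‖ ≤ m * dist p (x n) := fun n p => by
    have := hflip n p (x n)
    rwa [hf0, sub_zero] at this
  have hgK' : ∀ n (p q : X), dist p (x n) < ρ n / 2 → ‖g n p - g n q‖ ≤ 3 * m * dist p q :=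
    fun n p q hp => by
      have e : g n p - g n q = f n p * (cut 𝕂 {(x n : X)} (ρ n / 4) p -
          cut 𝕂 {(x n : X)} (ρ n / 4) q) + (f n p - f n q) * cut 𝕂 {(x n : X)} (ρ n / 4) q := by
        simp only [g, Pi.mul_apply]; ring
      rw [e]
      refine (norm_add_le _ _).trans ?_
      rw [norm_mul, norm_mul]
      have h1 : ‖f n p‖ * ‖cut 𝕂 {(x n : X)} (ρ n / 4) p - cut 𝕂 {(x n : X)} (ρ n / 4) q‖ ≤
          (m * (ρ n / 2)) * ((ρ n / 4)⁻¹ * dist p q) :=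
        mul_le_mul ((hfsmall n p).trans (mul_le_mul_of_nonneg_left hp.le (Nat.cast_nonneg m)))
          (norm_cut_sub_le _ (hr n) p q) (norm_nonneg _) (by have := hρ n; positivity)
      have h2 : ‖f n p - f n q‖ * ‖cut 𝕂 {(x n : X)} (ρ n / 4) q‖ ≤ (m * dist p q) * 1 :=
        mul_le_mul (hflip n p q) (norm_cut_le _ _ _) (norm_nonneg _) (by positivity)
      have h3 : (m * (ρ n / 2)) * ((ρ n / 4)⁻¹ * dist p q) = 2 * m * dist p q := by
        have := (hρ n).ne'
        field_simp
        ring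
      linarith
  have hgK : ∀ n (p q : X), ‖g n p - g n q‖ ≤ 3 * m * dist p q := fun n p q => by
    by_cases hp : dist p (x n) < ρ n / 2
    · exact hgK' n p q hp
    · by_cases hq : dist q (x n) < ρ n / 2
      · rw [norm_sub_rev, dist_comm]
        exact hgK' n q p hq
      · rw [by_contra fun h => hp (hgne n p h), by_contra fun h => hq (hgne n q h)]
        simp only [sub_self, norm_zero]
        positivity
  obtain ⟨D, hD⟩ := Metric.isBounded_iff.1 hXb
  have hgC : ∀ n (p : X), ‖g n p‖ ≤ m * max D 0 := fun n p => by
    simp only [g, Pi.mul_apply, norm_mul]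
    have h1 : ‖f n p‖ ≤ m * max D 0 := (hfsmall n p).trans (mul_le_mul_of_nonneg_left
      ((hD (mem_univ _) (mem_univ _)).trans (le_max_left _ _)) (Nat.cast_nonneg m))
    calc _ ≤ (m * max D 0) * 1 :=
          mul_le_mul h1 (norm_cut_le _ _ _) (norm_nonneg _) (by positivity)
      _ = _ := mul_one _
  obtain ⟨G, hG, hG1, hG2⟩ := isLip_glue (g := fun k => g (φ (2 * k))) (K := 3 * m)
    (C := m * max D 0) (by positivity) (by positivity) (fun n => hgK _) (fun n => hgC _)
    (fun n k p hnk hn => by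
      by_contra hk
      refine hdisj _ _ p (fun he => ?_) (hgne _ p hn) (hgne _ p hk)
      have := hφ.injective he
      omega)
  have heven : ∀ k, T G (y (φ (2 * k))) = 1 := fun k => by
    rw [← hf1 (φ (2 * k))]
    refine hT.apply_eq_of_eq_near hG (hf _) (hsupp _) (hr (φ (2 * k))) fun p hp => ?_
    have e : g (φ (2 * k)) p = f (φ (2 * k)) p := by
      simp only [g, Pi.mul_apply]
      rw [cut_eq_one (hr _) (by rw [infDist_singleton]; exact hp.le), mul_one]
    by_cases h0 : f (φ (2 * k)) p = 0
    · rw [h0]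
      refine hG2 p fun j => ?_
      by_cases hjk : j = k
      · rw [hjk, e, h0]
      · by_contra hj
        refine hdisj _ _ p (fun he => ?_) (hgne _ p hj) (hp.trans ?_)
        · have := hφ.injective he
          omega
        · linarith [hr (φ (2 * k))]
    · rw [← e] at h0 ⊢
      exact hG1 k p h0
  have hodd : ∀ k, T G (y (φ (2 * k + 1))) = 0 := fun k => by
    refine hsupp _ G hG ⟨_, hr (φ (2 * k + 1)), fun p hp => hG2 p fun j => ?_⟩
    by_contra hj
    refine hdisj _ _ p (fun he => ?_) (hgne _ p hj) (hp.trans ?_)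
    · have := hφ.injective he
      omega
    · linarith [hr (φ (2 * k + 1))]
  have t2 : Tendsto (fun k : ℕ => 2 * k) atTop atTop :=
    tendsto_atTop_mono (fun k => by rw [id]; omega) tendsto_id
  have t3 : Tendsto (fun k : ℕ => 2 * k + 1) atTop atTop :=
    tendsto_atTop_mono (fun k => by rw [id]; omega) tendsto_id
  have e1 : T G z = 1 := by
    refine tendsto_nhds_unique (((hT.maps _ hG).continuous.tendsto z).comp (hlim.comp t2)) ?_
    exact tendsto_const_nhds.congr fun k => (heven k).symm
  have e2 : T G z = 0 := by
    refine tendsto_nhds_unique (((hT.maps _ hG).continuous.tendsto z).comp (hlim.comp t3)) ?_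
    exact tendsto_const_nhds.congr fun k => (hodd k).symm
  exact one_ne_zero (e1.symm.trans e2)

lemma dense_compl_badSet [CompactSpace Y] (hXb : IsBounded (univ : Set X)) (m : ℕ) :
    Dense (badSet T m)ᶜ := by
  rw [← interior_eq_empty_iff_dense_compl, Set.eq_empty_iff_forall_notMem]
  intro x hx
  -- A finite neighbourhood of `x` makes `x` isolated, and then `f x = 0` means `f = 0` near `x`.
  have hfin := (hT.finite_badSet hXb m).subset (sdiff_subset (t := {x}))
  have hnhds : interior (badSet T m) ∩ (badSet T m \ {x})ᶜ ∈ 𝓝 x :=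
    (isOpen_interior.inter hfin.isClosed.isOpen_compl).mem_nhds ⟨hx, by simp⟩
  obtain ⟨r, hr, hball⟩ := Metric.mem_nhds_iff.1 hnhds
  obtain ⟨y, f, hsupp, hf, -, hf0, hf1⟩ := interior_subset hx
  refine zero_ne_one ((hsupp f hf ⟨r, hr, fun p hp => ?_⟩).symm.trans hf1)
  obtain ⟨h1, h2⟩ := hball hp
  have : p = x := by
    by_contra hne
    exact h2 ⟨interior_subset h1, hne⟩
  rw [this, hf0]

/-- On a dense set of `x`, the map `T` is a weighted evaluation: `T f y = f x * a`, with `a ≠ 0`,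
for some `y`. -/
lemma exists_dense_good [CompactSpace Y] [CompleteSpace X] (hXb : IsBounded (univ : Set X)) :
    Dense {x : X | ∃ (y : Y) (a : 𝕂), a ≠ 0 ∧ ∀ f, IsLip f → T f y = f x * a} := by
  have hd : Dense (⋂ m, (badSet T m)ᶜ) := dense_iInter_of_isOpen_nat
    (fun m => (hT.finite_badSet hXb m).isClosed.isOpen_compl) (hT.dense_compl_badSet hXb)
  refine hd.mono fun x hx => ?_
  obtain ⟨y, hxy⟩ := hT.exists_isSupp x
  have hker : ∀ f, IsLip f → f x = 0 → T f y = 0 := fun f hf hfx => by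
    by_contra hne
    have hf' := hf.smul (T f y)⁻¹
    obtain ⟨K, C, hK0, -, hK, -⟩ := hf'.exists_bounds
    obtain ⟨m, hm⟩ := exists_nat_ge K
    refine mem_iInter.1 hx m ⟨y, (T f y)⁻¹ • f, hxy, hf', fun p q => (hK p q).trans ?_, ?_, ?_⟩
    · exact mul_le_mul_of_nonneg_right hm dist_nonneg
    · simp [hfx]
    · rw [hT.smul _ _ hf]
      simp [hne]
  have h1 : IsLip (fun _ : X => (1 : 𝕂)) := isLip_const 1
  have hform : ∀ f, IsLip f → T f y = f x * T (fun _ => 1) y := fun f hf => by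
    have := hker (f - f x • fun _ => 1) (hf.sub (h1.smul _)) (by simp)
    rw [hT.map_sub hf (h1.smul _), hT.smul _ _ h1] at this
    simpa [sub_eq_zero] using this
  refine ⟨y, T (fun _ => 1) y, fun h0 => ?_, hform⟩
  obtain ⟨f, hf, hfy⟩ := hT.exists_apply_eq_one y
  rw [hform f hf, h0, mul_zero] at hfy
  exact zero_ne_one hfy

end IsSepBij

end Sep

/-! ### The Banach space of bounded Lipschitz functions -/

section Banach

/-- `Lip(X)` as a closed subspace of `ℓ^∞(X ⊕ X × X)`: a function `f` is encoded by its values and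
its difference quotients, so that the supremum norm is the Lipschitz norm. The quotient is `0` on
the diagonal, by division by zero. -/
def lipSpace (𝕂 X : Type*) [RCLike 𝕂] [MetricSpace X] :
    Submodule 𝕂 (lp (fun _ : X ⊕ X × X => 𝕂) ⊤) where
  carrier := {F | ∀ p q, F (Sum.inr (p, q)) = (F (Sum.inl p) - F (Sum.inl q)) / (dist p q : 𝕂)}
  add_mem' := fun {F G} hF hG p q => by
    simp only [lp.coeFn_add, Pi.add_apply, hF p q, hG p q]
    ring
  zero_mem' := fun p q => by simp
  smul_mem' := fun c F hF p q => by
    simp only [lp.coeFn_smul, Pi.smul_apply, hF p q, smul_eq_mul]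
    ring

variable {𝕂 X Y : Type*} [RCLike 𝕂] [MetricSpace X] [MetricSpace Y]

lemma continuous_lp_apply {ι : Type*} (i : ι) :
    Continuous fun F : lp (fun _ : ι => 𝕂) ⊤ => F i :=
  (continuous_apply i).comp lp.uniformContinuous_coe.continuous

instance : CompleteSpace (lipSpace 𝕂 X) := by
  have : IsClosed (lipSpace 𝕂 X : Set (lp (fun _ : X ⊕ X × X => 𝕂) ⊤)) := by
    have e : (lipSpace 𝕂 X : Set (lp (fun _ : X ⊕ X × X => 𝕂) ⊤)) =
        ⋂ p, ⋂ q, {F | F (Sum.inr (p, q)) =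
          (F (Sum.inl p) - F (Sum.inl q)) / (dist p q : 𝕂)} := by
      ext F
      simp only [mem_iInter]
      rfl
    rw [e]
    exact isClosed_iInter fun p => isClosed_iInter fun q => isClosed_eq (continuous_lp_apply _)
      (((continuous_lp_apply _).sub (continuous_lp_apply _)).div_const _)
  exact this.completeSpace_coe

/-- The values and difference quotients of `f`. -/
noncomputable def encode (f : X → 𝕂) : X ⊕ X × X → 𝕂 :=
  Sum.elim f fun p => (f p.1 - f p.2) / (dist p.1 p.2 : 𝕂)

lemma norm_quot (f : X → 𝕂) (p : X × X) :
    ‖(f p.1 - f p.2) / (dist p.1 p.2 : 𝕂)‖ = ‖f p.1 - f p.2‖ / dist p.1 p.2 := by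
  rw [norm_div, RCLike.norm_ofReal, abs_of_nonneg dist_nonneg]

lemma IsLip.bddAbove_quot {f : X → 𝕂} (hf : IsLip f) :
    BddAbove (range fun p : X × X => ‖f p.1 - f p.2‖ / dist p.1 p.2) := by
  obtain ⟨K, C, hK0, -, hK, -⟩ := hf.exists_bounds
  refine ⟨K, ?_⟩
  rintro _ ⟨p, rfl⟩
  exact div_le_of_le_mul₀ dist_nonneg hK0 (hK _ _)

lemma IsLip.bddAbove_norm {f : X → 𝕂} (hf : IsLip f) : BddAbove (range fun p => ‖f p‖) := by
  obtain ⟨K, C, -, -, -, hC⟩ := hf.exists_bounds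
  refine ⟨C, ?_⟩
  rintro _ ⟨p, rfl⟩
  exact hC p

lemma lipNorm_nonneg (f : X → 𝕂) : 0 ≤ lipNorm f :=
  (Real.iSup_nonneg fun _ => norm_nonneg _).trans (le_max_left _ _)

lemma IsLip.norm_encode_le {f : X → 𝕂} (hf : IsLip f) (i : X ⊕ X × X) :
    ‖encode f i‖ ≤ lipNorm f := by
  rcases i with p | p
  · exact (le_ciSup hf.bddAbove_norm p).trans (le_max_left _ _)
  · simp only [encode, Sum.elim_inr]
    rw [norm_quot]
    exact (le_ciSup hf.bddAbove_quot p).trans (le_max_right _ _)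

/-- The element of `lipSpace` given by a bounded Lipschitz function. -/
noncomputable def toLip (f : X → 𝕂) (hf : IsLip f) : lipSpace 𝕂 X :=
  ⟨⟨encode f, memℓp_infty ⟨lipNorm f, by rintro _ ⟨i, rfl⟩; exact hf.norm_encode_le i⟩⟩,
    fun _ _ => rfl⟩

/-- The bounded Lipschitz function underlying an element of `lipSpace`. -/
def ofLip (F : lipSpace 𝕂 X) : X → 𝕂 := fun p => F.1 (Sum.inl p)

lemma isLip_ofLip (F : lipSpace 𝕂 X) : IsLip (ofLip F) := by
  refine isLip_of_le ‖F.1‖ ‖F.1‖ (fun p q => ?_) fun p => lp.norm_apply_le_norm (by simp) F.1 _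
  rcases eq_or_ne p q with rfl | hpq
  · simp
  · have h1 := lp.norm_apply_le_norm (by simp) F.1 (Sum.inr (p, q))
    rw [F.2 p q, norm_div, RCLike.norm_ofReal, abs_of_nonneg dist_nonneg,
      div_le_iff₀ (dist_pos.2 hpq)] at h1
    exact h1

lemma ofLip_toLip {f : X → 𝕂} (hf : IsLip f) : ofLip (toLip f hf) = f := rfl

lemma ofLip_injective : Function.Injective (ofLip : lipSpace 𝕂 X → X → 𝕂) := by
  intro F G h
  refine Subtype.ext (lp.ext (funext fun i => ?_))
  rcases i with p | ⟨p, q⟩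
  · exact congrFun h p
  · rw [F.2 p q, G.2 p q]
    exact congrArg₂ (fun a b => (a - b) / (dist p q : 𝕂)) (congrFun h p) (congrFun h q)

lemma norm_toLip_le {f : X → 𝕂} (hf : IsLip f) : ‖toLip f hf‖ ≤ lipNorm f :=
  lp.norm_le_of_forall_le (lipNorm_nonneg f) hf.norm_encode_le

lemma lipNorm_le_norm_toLip {f : X → 𝕂} (hf : IsLip f) : lipNorm f ≤ ‖toLip f hf‖ := by
  have h : ∀ i, ‖encode f i‖ ≤ ‖toLip f hf‖ := fun i =>
    lp.norm_apply_le_norm (by simp) (toLip f hf).1 i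
  refine max_le (Real.iSup_le (fun p => h (Sum.inl p)) (norm_nonneg _))
    (Real.iSup_le (fun p => ?_) (norm_nonneg _))
  rw [← norm_quot]
  exact h (Sum.inr p)

lemma continuous_ofLip_apply (p : X) : Continuous fun F : lipSpace 𝕂 X => ofLip F p :=
  (continuous_lp_apply _).comp continuous_subtype_val

/-- The linear map between Banach spaces induced by `T`. -/
noncomputable def IsSepBij.toLinearMap {T : (X → 𝕂) → (Y → 𝕂)} (hT : IsSepBij T) :
    lipSpace 𝕂 X →ₗ[𝕂] lipSpace 𝕂 Y where
  toFun F := toLip (T (ofLip F)) (hT.maps _ (isLip_ofLip F))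
  map_add' F G := ofLip_injective (hT.add _ _ (isLip_ofLip F) (isLip_ofLip G))
  map_smul' c F := ofLip_injective (hT.smul c _ (isLip_ofLip F))

lemma IsSepBij.continuous_toLinearMap [CompactSpace Y] [CompleteSpace X]
    {T : (X → 𝕂) → (Y → 𝕂)} (hT : IsSepBij T) (hXb : IsBounded (univ : Set X)) :
    Continuous hT.toLinearMap := by
  refine LinearMap.continuous_of_seq_closed_graph _ fun u F H hu hTu => ?_
  obtain ⟨k, hk, hkH⟩ := hT.surj _ (isLip_ofLip H)
  have hkF : k = ofLip F := by
    refine Continuous.ext_on (hT.exists_dense_good hXb) hk.continuous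
      (isLip_ofLip F).continuous ?_
    rintro x ⟨y, a, ha, hform⟩
    have l1 : Tendsto (fun n => ofLip (u n) x * a) atTop (𝓝 (ofLip F x * a)) :=
      (((continuous_ofLip_apply x).tendsto F).comp hu).mul_const a
    have l2 : Tendsto (fun n => ofLip (u n) x * a) atTop (𝓝 (ofLip H y)) :=
      (((continuous_ofLip_apply y).tendsto H).comp hTu).congr fun n =>
        hform _ (isLip_ofLip (u n))
    have e := tendsto_nhds_unique l1 l2
    rw [← hkH, hform k hk] at e
    exact (mul_right_cancel₀ ha e).symm
  refine ofLip_injective ?_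
  rw [← hkH, hkF]
  rfl

end Banach

/-- A bijective linear separating map `T : Lip(X) → Lip(Y)` with `Y` compact is
biseparating (its inverse is also separating) and continuous. -/
theorem separating_bijective_scalar_is_biseparating
    {𝕂 X Y : Type*} [RCLike 𝕂]
    [MetricSpace X] [CompleteSpace X] [MetricSpace Y] [CompleteSpace Y] [CompactSpace Y]
    (hXb : IsBounded (univ : Set X)) (hYb : IsBounded (univ : Set Y))
    (T : (X → 𝕂) → (Y → 𝕂))
    (hmaps : ∀ f, IsLip f → IsLip (T f))
    (hadd : ∀ f g, IsLip f → IsLip g → T (f + g) = T f + T g)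
    (hsmul : ∀ (c : 𝕂) (f : X → 𝕂), IsLip f → T (c • f) = c • T f)
    (hinj : ∀ f g, IsLip f → IsLip g → T f = T g → f = g)
    (hsurj : ∀ g, IsLip g → ∃ f, IsLip f ∧ T f = g)
    (hsep : ∀ f g, IsLip f → IsLip g → coz f ∩ coz g = ∅ → coz (T f) ∩ coz (T g) = ∅) :
    (∀ f g, IsLip f → IsLip g → coz (T f) ∩ coz (T g) = ∅ → coz f ∩ coz g = ∅) ∧
    ∃ C : ℝ, 0 ≤ C ∧ ∀ f, IsLip f → lipNorm (T f) ≤ C * lipNorm f := by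
  have hT : IsSepBij T := ⟨hmaps, hadd, hsmul, hinj, hsurj, hsep⟩
  refine ⟨fun f g hf hg hd => ?_, ?_⟩
  · rw [Set.eq_empty_iff_forall_notMem]
    rintro x₀ ⟨hfx, hgx⟩
    have ho : IsOpen {x | f x ≠ 0 ∧ g x ≠ 0} :=
      (isOpen_ne.preimage hf.continuous).inter (isOpen_ne.preimage hg.continuous)
    obtain ⟨x, ⟨hf0, hg0⟩, y, a, ha, hform⟩ :=
      (hT.exists_dense_good hXb).inter_open_nonempty _ ho ⟨x₀, hfx, hgx⟩
    have hy : y ∈ coz (T f) ∩ coz (T g) :=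
      ⟨by rw [coz, mem_ofPred_eq, hform f hf]; exact mul_ne_zero hf0 ha,
        by rw [coz, mem_ofPred_eq, hform g hg]; exact mul_ne_zero hg0 ha⟩
    rw [hd] at hy
    exact hy
  · let S : lipSpace 𝕂 X →L[𝕂] lipSpace 𝕂 Y :=
      ⟨hT.toLinearMap, hT.continuous_toLinearMap hXb⟩
    obtain ⟨C, hC0, hC⟩ := S.bound
    refine ⟨C, hC0.le, fun f hf => ?_⟩
    calc lipNorm (T f) ≤ ‖S (toLip f hf)‖ := lipNorm_le_norm_toLip (hmaps f hf)
      _ ≤ C * ‖toLip f hf‖ := hC _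
      _ ≤ C * lipNorm f := mul_le_mul_of_nonneg_left (norm_toLip_le hf) hC0.le
end

section
/- Let (X,d₁) and (Y,d₂) be metric spaces and set d₁' := min{2, d₁}, which is a metric on X inducing the same topology as d₁. Then a map f: Y → X is Lipschitz as a map from (Y,d₂) to (X,d₁') if and only if f is Lipschitz in the small as a map from (Y,d₂) to (X,d₁), i.e., there exist r > 0 and k > 0 such that d₁(f(y), f(y')) ≤ k · d₂(y, y') whenever d₂(y, y') < r. -/
/-! The truncation at `2` is invisible at scales where `k * d₂ < 2`, which gives the forward
direction. Conversely, at distances `d₂ ≥ r` the truncated metric is at most `2 ≤ (2 / r) * d₂`,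
so `k + 2 / r` is a global Lipschitz constant. -/

/-- For metric spaces `(X,d₁)` and `(Y,d₂)`, a map `f : Y → X` is Lipschitz
with respect to the truncated metric `d₁' = min {2, d₁}` on `X` if and only if it is Lipschitz
in the small with respect to `d₁`. -/
theorem lipschitz_truncated_iff_lipschitz_in_the_small
    {X Y : Type*} [MetricSpace X] [MetricSpace Y] (f : Y → X) :
    (∃ k : ℝ, 0 ≤ k ∧ ∀ y y' : Y, min 2 (dist (f y) (f y')) ≤ k * dist y y') ↔
    (∃ r > (0 : ℝ), ∃ k > (0 : ℝ),
      ∀ y y' : Y, dist y y' < r → dist (f y) (f y') ≤ k * dist y y') := by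
  constructor
  · rintro ⟨k, hk, h⟩
    -- `k + 1` rather than `k` keeps the constant positive and the radius well defined for `k = 0`.
    refine ⟨2 / (k + 1), by positivity, k + 1, by positivity, fun y y' hr => ?_⟩
    rw [lt_div_iff₀ (by positivity)] at hr
    have hd : 0 ≤ dist y y' := dist_nonneg
    rcases min_le_iff.mp (h y y') with h2 | h2 <;> linarith
  · rintro ⟨r, hr, k, hk, h⟩
    refine ⟨k + 2 / r, by positivity, fun y y' => ?_⟩
    have hd : 0 ≤ dist y y' := dist_nonneg
    rw [add_mul]
    rcases lt_or_ge (dist y y') r with hlt | hge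
    · have h0 : 0 ≤ 2 / r * dist y y' := by positivity
      exact (min_le_right _ _).trans (by linarith [h y y' hlt])
    · have h0 : 0 ≤ k * dist y y' := by positivity
      have h2 : 2 ≤ 2 / r * dist y y' := by
        rw [div_mul_eq_mul_div, le_div_iff₀ hr]
        linarith
      exact (min_le_left _ _).trans (by linarith)
end

section
/- Let (X,d₁) be a metric space, let E be a normed space, and set d₁' := min{2, d₁}. Then a function f: X → E is bounded and Lipschitz with respect to d₁ if and only if it is bounded and Lipschitz with respect to d₁', and in that case max{‖f‖_∞, L_{d₁}(f)} = max{‖f‖_∞, L_{d₁'}(f)}, where L_{d}(f) denotes the Lipschitz number of f with respect to the metric d. In other words, the identity map is an isometric isomorphism between the space of bounded Lipschitz functions on (X,d₁) and that on (X,d₁'), each with norm ‖f‖_L = max{‖f‖_∞, L(f)}. -/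
/-!
Two points at distance at most `2` are equally far apart for both metrics, so they contribute the
same difference quotient. For points further apart the truncated quotient is `‖f x - f x'‖ / 2`,
which the triangle inequality bounds by `‖f‖_∞`. Hence passing from `d₁` to `min {2, d₁}` can only
raise the Lipschitz number up to `max {‖f‖_∞, L_{d₁}(f)}`
(`norm_sub_le_mul_min_two_dist`); the reverse comparison holds because `min {2, d₁} ≤ d₁`.
-/

/-- A constant that bounds both `‖f‖` and the Lipschitz number for `d` is a Lipschitz constant for
`min {2, d}`. -/
lemma norm_sub_le_mul_min_two_dist {X E : Type*} [MetricSpace X] [NormedAddCommGroup E] {f : X → E}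
    {M : ℝ} (hC : ∀ x, ‖f x‖ ≤ M) (hL : ∀ x x' : X, ‖f x - f x'‖ ≤ M * dist x x') (x x' : X) :
    ‖f x - f x'‖ ≤ M * min 2 (dist x x') := by
  rcases min_choice 2 (dist x x') with h | h
  · rw [h]
    linarith [norm_sub_le (f x) (f x'), hC x, hC x']
  · rw [h]
    exact hL x x'

/-- For a metric space `(X,d₁)` and a normed space `E`, a function `f : X → E`
is bounded and Lipschitz for `d₁` iff it is bounded and Lipschitz for the truncated metric
`d₁' = min {2, d₁}`, and in that case `max {‖f‖_∞, L_{d₁}(f)} = max {‖f‖_∞, L_{d₁'}(f)}`;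
i.e. the identity is an isometric isomorphism between the two bounded Lipschitz spaces. -/
theorem lipNorm_truncated_metric_eq
    {X E : Type*} [MetricSpace X] [NormedAddCommGroup E] (f : X → E) :
    (((∃ C : ℝ, ∀ x, ‖f x‖ ≤ C) ∧
        ∃ k : ℝ, 0 ≤ k ∧ ∀ x x' : X, ‖f x - f x'‖ ≤ k * dist x x') ↔
      ((∃ C : ℝ, ∀ x, ‖f x‖ ≤ C) ∧
        ∃ k : ℝ, 0 ≤ k ∧ ∀ x x' : X, ‖f x - f x'‖ ≤ k * min 2 (dist x x'))) ∧
    (((∃ C : ℝ, ∀ x, ‖f x‖ ≤ C) ∧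
        ∃ k : ℝ, 0 ≤ k ∧ ∀ x x' : X, ‖f x - f x'‖ ≤ k * dist x x') →
      max (⨆ x, ‖f x‖) (⨆ p : X × X, ‖f p.1 - f p.2‖ / dist p.1 p.2) =
        max (⨆ x, ‖f x‖) (⨆ p : X × X, ‖f p.1 - f p.2‖ / min 2 (dist p.1 p.2))) := by
  have trunc_nonneg : ∀ x x' : X, 0 ≤ min 2 (dist x x') := fun x x' =>
    le_min zero_le_two dist_nonneg
  have trunc : ∀ C k : ℝ, (∀ x, ‖f x‖ ≤ C) →
      (∀ x x' : X, ‖f x - f x'‖ ≤ k * dist x x') →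
      ∀ x x' : X, ‖f x - f x'‖ ≤ max C k * min 2 (dist x x') := fun C k hC hL =>
    norm_sub_le_mul_min_two_dist (fun x => (hC x).trans (le_max_left _ _))
      fun x x' => (hL x x').trans
        (mul_le_mul_of_nonneg_right (le_max_right _ _) dist_nonneg)
  refine ⟨⟨?_, ?_⟩, ?_⟩
  · rintro ⟨⟨C, hC⟩, k, hk, hL⟩
    exact ⟨⟨C, hC⟩, max C k, le_max_of_le_right hk, trunc C k hC hL⟩
  · rintro ⟨hb, k, hk, hL⟩
    exact ⟨hb, k, hk, fun x x' =>
      (hL x x').trans (mul_le_mul_of_nonneg_left (min_le_right _ _) hk)⟩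
  · rintro ⟨⟨C, hC⟩, k, hk, hL⟩
    -- The suprema are genuine only once boundedness is known. On the diagonal both quotients
    -- are `0 / 0 = 0`.
    have bddSup : BddAbove (Set.range fun x => ‖f x‖) := ⟨C, by rintro _ ⟨x, rfl⟩; exact hC x⟩
    have bddLip : BddAbove (Set.range fun p : X × X => ‖f p.1 - f p.2‖ / dist p.1 p.2) :=
      ⟨k, by
        rintro _ ⟨p, rfl⟩
        exact div_le_of_le_mul₀ dist_nonneg hk (hL _ _)⟩
    have bddTrunc :
        BddAbove (Set.range fun p : X × X => ‖f p.1 - f p.2‖ / min 2 (dist p.1 p.2)) :=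
      ⟨max C k, by
        rintro _ ⟨p, rfl⟩
        exact div_le_of_le_mul₀ (trunc_nonneg _ _) (le_max_of_le_right hk)
          (trunc C k hC hL _ _)⟩
    have sup_nonneg : 0 ≤ ⨆ x, ‖f x‖ := Real.iSup_nonneg fun x => norm_nonneg _
    have le_lip : ∀ x x' : X,
        ‖f x - f x'‖ ≤ (⨆ p : X × X, ‖f p.1 - f p.2‖ / dist p.1 p.2) * dist x x' := by
      intro x x'
      rcases eq_or_ne x x' with rfl | hne
      · simp
      · exact (div_le_iff₀ (dist_pos.2 hne)).1 (le_ciSup bddLip (x, x'))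
    apply le_antisymm
    · refine max_le_max le_rfl (ciSup_mono bddTrunc fun p => ?_)
      rcases eq_or_ne p.1 p.2 with h | hne
      · simp [h]
      · exact div_le_div_of_nonneg_left (norm_nonneg _)
          (lt_min two_pos (dist_pos.2 hne)) (min_le_right _ _)
    · refine max_le (le_max_left _ _) (Real.iSup_le (fun p => ?_) (le_max_of_le_left sup_nonneg))
      exact div_le_of_le_mul₀ (trunc_nonneg _ _) (le_max_of_le_left sup_nonneg)
        (trunc _ _ (le_ciSup bddSup) le_lip _ _)
end

section
/- Let X be a metric space and E a normed space. Let (f_n) be a sequence of bounded Lipschitz functions f_n: X → E with pairwise disjoint cozero sets, and suppose there is a constant M > 0 such that L(f_n) ≤ M for all n ∈ ℕ. If the pointwise sum f := Σ_{n=1}^∞ f_n is continuous, then f is Lipschitz with L(f) ≤ 2M. -/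
/-!
At every point `x` some single index `n` carries the whole sum: `f x = fN n x`, and all other
terms vanish at `x`. For points `x`, `y` carried by the same index the bound is that of `fN n`.
For different indices `n`, `m`, disjointness gives `fN n y = 0 = fN m x`, so
`f x - f y = (fN n x - fN n y) + (fN m x - fN m y)`, and the two Lipschitz bounds add up to `2 * M`.
-/

open scoped NNReal

/-- At each point one index carries the whole sum (any index will do where all terms vanish). -/
theorem exists_carrier {X E : Type*} [NormedAddCommGroup E] (fN : ℕ → X → E)
    (hdisj : ∀ n m, n ≠ m → coz (fN n) ∩ coz (fN m) = ∅)
    (f : X → E) (hf : ∀ x, HasSum (fun n => fN n x) (f x)) (x : X) :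
    ∃ n, f x = fN n x ∧ ∀ k, k ≠ n → fN k x = 0 := by
  obtain ⟨n, hn⟩ : ∃ n, ∀ k, k ≠ n → fN k x = 0 := by
    by_cases h : ∃ n, fN n x ≠ 0
    · obtain ⟨n, hn⟩ := h
      refine ⟨n, fun k hk => ?_⟩
      by_contra hkx
      have hmem : x ∈ coz (fN k) ∩ coz (fN n) := ⟨hkx, hn⟩
      rw [hdisj k n hk] at hmem
      exact hmem
    · push Not at h
      exact ⟨0, fun k _ => h k⟩
  exact ⟨n, (hf x).unique (hasSum_single n hn), hn⟩

/-- If `(f n)` are bounded Lipschitz functions with pairwise disjoint cozero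
sets, `L(f n) ≤ M` for all `n`, and the pointwise sum `f` is continuous, then `f` is Lipschitz
with `L(f) ≤ 2 M`. -/
theorem lipschitz_of_disjoint_sum
    {X E : Type*} [MetricSpace X] [NormedAddCommGroup E]
    (fN : ℕ → X → E) (M : ℝ≥0) (hM : 0 < M)
    (hbdd : ∀ n, ∃ C : ℝ, ∀ x, ‖fN n x‖ ≤ C)
    (hlip : ∀ n, LipschitzWith M (fN n))
    (hdisj : ∀ n m, n ≠ m → coz (fN n) ∩ coz (fN m) = ∅)
    (f : X → E) (hf : ∀ x, HasSum (fun n => fN n x) (f x))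
    (hcont : Continuous f) :
    LipschitzWith (2 * M) f := by
  refine LipschitzWith.of_dist_le_mul fun x y => ?_
  obtain ⟨n, hn, hn0⟩ := exists_carrier fN hdisj f hf x
  obtain ⟨m, hm, hm0⟩ := exists_carrier fN hdisj f hf y
  have h1 := (hlip n).dist_le_mul x y
  have h2 := (hlip m).dist_le_mul x y
  have hd : (0 : ℝ) ≤ M * dist x y := by positivity
  push_cast
  by_cases hnm : n = m
  · subst hnm
    rw [hn, hm]
    linarith
  · rw [hm0 n hnm] at h1
    rw [hn0 m (Ne.symm hnm)] at h2
    rw [hn, hm]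
    linarith [dist_triangle (fN n x) 0 (fN m y)]
end

section
/- Let X be a metric space, E a normed space, x₀ ∈ X and r > 0, and define φ: X → ℝ by φ(x) = max{0, 1 − d(x, B(x₀,r))/r}, where B(x₀,r) is the open ball of radius r around x₀ and d(x,A) = inf{d(x,a) : a ∈ A}. If f: X → E is a Lipschitz function with f(x₀) = 0, then the product fφ is Lipschitz with L(fφ) ≤ 3 L(f). -/
/-!
Write `φ` for the plateau function. It takes values in `[0, 1]`, is `1/r`-Lipschitz, and vanishes
off `B(x₀, 2r)`; on that ball `f x₀ = 0` gives `‖f x‖ ≤ 2 r K`. Hence, if `φ x ≠ 0`, the splitting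
`φ x • f x - φ y • f y = φ y • (f x - f y) + (φ x - φ y) • f x` bounds the left side by
`K d(x, y) + (d(x, y) / r) (2 r K) = 3 K d(x, y)`. If `φ x = 0`, exchange `x` and `y`, unless
`φ y = 0` too, in which case there is nothing to prove.
-/

open Metric
open scoped NNReal

/-- Let `φ(x) = max {0, 1 - d(x, B(x₀,r))/r}`. If `f : X → E` is Lipschitz
(with constant `K`) and `f x₀ = 0`, then the product `f φ` is Lipschitz with
`L(f φ) ≤ 3 L(f)`. -/
theorem lipschitz_mul_plateau
    {X E : Type*} [MetricSpace X] [NormedAddCommGroup E] [NormedSpace ℝ E]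
    (x₀ : X) (r : ℝ) (hr : 0 < r)
    (f : X → E) (K : ℝ≥0) (hf : LipschitzWith K f) (h0 : f x₀ = 0) :
    LipschitzWith (3 * K)
      (fun x => (max 0 (1 - infDist x (ball x₀ r) / r)) • f x) := by
  set φ : X → ℝ := fun x => max 0 (1 - infDist x (ball x₀ r) / r) with hφ
  have hφ0 : ∀ x, 0 ≤ φ x := fun x => le_max_left _ _
  have hφ1 : ∀ x, φ x ≤ 1 := fun x =>
    max_le zero_le_one (sub_le_self _ (div_nonneg infDist_nonneg hr.le))
  have hφL : ∀ x y, |φ x - φ y| ≤ dist x y / r := by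
    intro x y
    have h1 : |infDist x (ball x₀ r) - infDist y (ball x₀ r)| ≤ dist x y := by
      simpa [Real.dist_eq] using (lipschitz_infDist_pt (ball x₀ r)).dist_le_mul x y
    have h2 := abs_max_sub_max_le_abs (1 - infDist x (ball x₀ r) / r)
      (1 - infDist y (ball x₀ r) / r) 0
    rw [max_comm _ 0, max_comm _ 0] at h2
    refine h2.trans ?_
    rw [sub_sub_sub_cancel_left, ← sub_div, abs_div, abs_of_pos hr, abs_sub_comm]
    gcongr
  have hsupp : ∀ x, φ x ≠ 0 → dist x x₀ < 2 * r := by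
    intro x hx
    have h1 : infDist x (ball x₀ r) < r := by
      by_contra! h
      exact hx (max_eq_left (sub_nonpos.2 ((one_le_div hr).2 h)))
    obtain ⟨z, hz, hxz⟩ := (infDist_lt_iff ⟨x₀, mem_ball_self hr⟩).1 h1
    have := dist_triangle x z x₀
    rw [mem_ball] at hz
    linarith
  have key : ∀ x y, φ x ≠ 0 → dist (φ x • f x) (φ y • f y) ≤ 3 * K * dist x y := by
    intro x y hx
    have hfx : ‖f x‖ ≤ K * (2 * r) := by
      have h := hf.dist_le_mul x x₀
      rw [h0, dist_zero_right] at h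
      exact h.trans (mul_le_mul_of_nonneg_left (hsupp x hx).le K.2)
    have hfxy : ‖f x - f y‖ ≤ K * dist x y := by
      simpa [dist_eq_norm] using hf.dist_le_mul x y
    have hsplit : φ x • f x - φ y • f y = φ y • (f x - f y) + (φ x - φ y) • f x := by
      module
    rw [dist_eq_norm, hsplit]
    calc ‖φ y • (f x - f y) + (φ x - φ y) • f x‖
        ≤ φ y * ‖f x - f y‖ + |φ x - φ y| * ‖f x‖ := by
          refine (norm_add_le _ _).trans_eq ?_
          rw [norm_smul, norm_smul, Real.norm_eq_abs, Real.norm_eq_abs, abs_of_nonneg (hφ0 y)]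
      _ ≤ 1 * (K * dist x y) + dist x y / r * (K * (2 * r)) := by
          gcongr
          · exact hφ1 y
          · exact hφL x y
      _ = 3 * K * dist x y := by
          field_simp
          ring
  refine LipschitzWith.of_dist_le_mul fun x y => ?_
  change dist (φ x • f x) (φ y • f y) ≤ ((3 * K : ℝ≥0) : ℝ) * dist x y
  push_cast
  by_cases hx : φ x = 0
  · by_cases hy : φ y = 0
    · rw [hx, hy, zero_smul, zero_smul, dist_self]
      positivity
    · rw [dist_comm, dist_comm x y]
      exact key y x hy
  · exact key x y hx
end
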